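/- For coprime positive integers s ≥ 2 and t, the sum over all (s,t)-cores λ of the reciprocal of the order of the stabiliser of λ under the level-t action of W̃_s on s-cores equals t^{s-1}/s!. -/

import Mathlib

/-- A partition: a weakly decreasing, eventually-zero sequence of naturals
(0-indexed: `f i` is the `(i+1)`-th part). -/
structure Partn where
  f : ℕ → ℕ
  antitone : Antitone f
  eventually_zero : ∃ N, ∀ i, N ≤ i → f i = 0

/-- The beta-set `B(λ) = {λ_i - i : i ≥ 1}`. -/
def betaSet (p : Partn) : Set ℤ := {b | ∃ i : ℕ, b = (p.f i : ℤ) - (i + 1)}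

/-- `conjCount p j` is the `(j+1)`-th part of the conjugate partition. -/
noncomputable def conjCount (p : Partn) (j : ℕ) : ℕ := Set.ncard {i : ℕ | j + 1 ≤ p.f i}

/-- Hook length of the cell in row `r+1`, column `c+1` (1-indexed formula
`1 + (λ_r - r) + (λ'_c - c)`). -/
noncomputable def hookLen (p : Partn) (r c : ℕ) : ℤ :=
  1 + ((p.f r : ℤ) - (r + 1)) + ((conjCount p c : ℤ) - (c + 1))

/-- `p` is an `s`-core: no hook length is divisible by `s`. -/
def IsCore (s : ℕ) (p : Partn) : Prop :=
  ∀ r c : ℕ, c < p.f r → ¬ ((s : ℤ) ∣ hookLen p r c)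

/-- `p` is self-conjugate. -/
def SelfConj (p : Partn) : Prop := ∀ j, p.f j = conjCount p j

/-- The `s`-set of an `s`-core: `S(λ) = (B(λ)+s) \ B(λ)`. -/
def sSet (s : ℕ) (p : Partn) : Set ℤ := {x | x - s ∈ betaSet p ∧ x ∉ betaSet p}

/-- An `s`-set: `s` integers, pairwise incongruent mod `s`, summing to `C(s,2)`. -/
def IsSSet (s : ℕ) (X : Set ℤ) : Prop :=
  X.ncard = s ∧ (∀ a ∈ X, ∀ b ∈ X, a ≠ b → ¬ ((s : ℤ) ∣ (a - b))) ∧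
    (∑ᶠ x ∈ X, x) = (s.choose 2 : ℤ)

/-- The affine symmetric group `W̃_s`, as a set of permutations of `ℤ`:
`w(m+s) = w(m)+s` and `w(0)+⋯+w(s-1) = C(s,2)`. -/
def AffSymSet (s : ℕ) : Set (Equiv.Perm ℤ) :=
  {w | (∀ m : ℤ, w (m + s) = w m + s) ∧
    (∑ i ∈ Finset.range s, w (i : ℤ)) = (s.choose 2 : ℤ)}

/-- The underlying function of the Coxeter generator `w_i` of `W̃_s`, where `a = i - 1`:
swaps `m` and `m+1` whenever `m ≡ i - 1 (mod s)`. -/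
def genFun (s : ℕ) (a : ℤ) : ℤ → ℤ := fun m =>
  if (s : ℤ) ∣ (m - a) then m + 1 else if (s : ℤ) ∣ (m - a - 1) then m - 1 else m

lemma genFun_involutive (s : ℕ) (hs : 2 ≤ s) (a : ℤ) :
    Function.Involutive (genFun s a) := by
  have h1 : ¬ ((s : ℤ) ∣ 1) := by
    intro h
    have := Int.le_of_dvd one_pos h
    omega
  intro m
  unfold genFun
  by_cases hA : (s : ℤ) ∣ (m - a)
  · rw [if_pos hA]
    have hB : ¬ (s : ℤ) ∣ (m + 1 - a) := by
      intro h
      have := dvd_sub h hA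
      rw [show m + 1 - a - (m - a) = 1 by ring] at this
      exact h1 this
    rw [if_neg hB, if_pos (by rw [show m + 1 - a - 1 = m - a by ring]; exact hA)]
    ring
  · rw [if_neg hA]
    by_cases hB : (s : ℤ) ∣ (m - a - 1)
    · rw [if_pos hB, if_pos (by rw [show m - 1 - a = m - a - 1 by ring]; exact hB)]
      ring
    · rw [if_neg hB, if_neg hA, if_neg hB]

/-- The Coxeter generator `w_i` of `W̃_s`, where `a = i - 1`. -/
def genPerm (s : ℕ) (hs : 2 ≤ s) (a : ℤ) : Equiv.Perm ℤ :=
  (genFun_involutive s hs a).toPerm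

/-- The constant `c = (s-1)(t-1)/2`. -/
def lc (s t : ℕ) : ℤ := (((s : ℤ) - 1) * ((t : ℤ) - 1)) / 2

/-- The image `ẘ_i` of the generator `w_i` under the level `t` action on `ℤ`:
`m ↦ m + t` if `m ≡ (i-1)t - c (mod s)`, `m ↦ m - t` if `m ≡ it - c (mod s)`,
`m ↦ m` otherwise. -/
def levelGenFun (s t : ℕ) (i : ℤ) : ℤ → ℤ := fun m =>
  if (s : ℤ) ∣ (m - ((i - 1) * t - lc s t)) then m + t
  else if (s : ℤ) ∣ (m - (i * t - lc s t)) then m - t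
  else m

/-- `Φ` is (the restriction to `W̃_s` of) the level `t` action of `W̃_s` on `ℤ`:
a multiplicative map on `W̃_s` sending each generator `w_i` to `ẘ_i`. -/
def IsLevelTAction (s t : ℕ) (hs : 2 ≤ s) (Φ : Equiv.Perm ℤ → Equiv.Perm ℤ) : Prop :=
  (∀ w v : Equiv.Perm ℤ, w ∈ AffSymSet s → v ∈ AffSymSet s → Φ (w * v) = Φ w * Φ v) ∧
  (∀ i m : ℤ, Φ (genPerm s hs (i - 1)) m = levelGenFun s t i m)

/-- Removing a rim hook of length `t`, in terms of beta-sets: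
`μ` is obtained from `λ` by removing a rim `t`-hook. -/
def RemoveHook (t : ℕ) (p q : Partn) : Prop :=
  ∃ b ∈ betaSet p, b - t ∉ betaSet p ∧ betaSet q = insert (b - t) (betaSet p \ {b})

/-!
An `s`-core is determined by an integer function `f` with `f (j + s) = f j - t`, its profile, in
which the level-`t` action of the affine symmetric group becomes precomposition. The core is also a
`t`-core exactly when its profile is antitone, and sorting by swaps shows that every orbit of
profiles contains exactly one antitone profile. Reducing a profile modulo `t` turns the affine
symmetric group into the symmetric group of `ZMod s`, and the profiles into the maps
`ZMod s → ZMod t` of sum zero: orbits correspond to orbits, and the stabiliser of a profile is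
isomorphic to that of its reduction. There are `t ^ (s - 1)` such maps, and in any finite action
the sum of `1 / |Stab|` over orbit representatives is the number of points divided by the order of
the group.
-/

open Finset

section Periodic

variable {s : ℕ} {α M : Type*} [AddCommMonoid M]

lemma map_add_mul_of_map_add {d : ℤ} {h : ℤ → ℤ} (hh : ∀ j, h (j + s) = h j + d) (j k : ℤ) :
    h (j + s * k) = h j + k * d := by
  simpa [mul_comm] using AddConstMapClass.map_add_zsmul (⟨h, hh⟩ : AddConstMap ℤ ℤ (s : ℤ) d) j k

lemma apply_eq_of_intCast_eq {h : ℤ → α} (hh : ∀ j, h (j + s) = h j) {a b : ℤ}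
    (hab : (a : ZMod s) = b) : h a = h b := by
  obtain ⟨k, hk⟩ := (ZMod.intCast_eq_intCast_iff_dvd_sub _ _ _).1 hab
  have hper : Function.Periodic h (s : ℤ) := hh
  rw [show b = a + k * s by linarith]
  exact (hper.int_mul k a).symm

variable [NeZero s]

lemma sum_range_eq_sum_zmod (h : ℤ → M) : ∑ i ∈ range s, h i = ∑ z : ZMod s, h z.val :=
  sum_bij' (fun i _ => (i : ZMod s)) (fun z _ => z.val) (by simp)
    (fun z _ => by simpa using z.val_lt) (fun i hi => ZMod.val_cast_of_lt (by simpa using hi))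
    (fun z _ => ZMod.natCast_zmod_val z)
    (fun i hi => by rw [ZMod.val_cast_of_lt (by simpa using hi)])

lemma sum_range_eq_add {h : ℤ → M} (hs : 2 ≤ s) (hh : ∀ j, h (j + s) = h j) (i : ℤ)
    (h0 : ∀ j : ℤ, (j : ZMod s) ≠ i → (j : ZMod s) ≠ i + 1 → h j = 0) :
    ∑ j ∈ range s, h j = h i + h (i + 1) := by
  have : Fact (1 < s) := ⟨hs⟩
  have hval : ∀ j : ℤ, h (j : ZMod s).val = h j := fun j => apply_eq_of_intCast_eq hh (by simp)
  rw [sum_range_eq_sum_zmod, Fintype.sum_eq_add (i : ZMod s) ((i + 1 : ℤ) : ZMod s) (by simp)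
    fun z hz => h0 _ (by simpa using hz.1) (by simpa using hz.2), hval, hval]

lemma exists_perm_zmod {w : Equiv.Perm ℤ} (hw : ∀ j, w (j + s) = w j + s) :
    ∃ σ : Equiv.Perm (ZMod s), ∀ j : ℤ, (w j : ZMod s) = σ j := by
  have hcast : ∀ j : ℤ, (w j : ZMod s) = (w ((j : ZMod s).val : ℤ) : ZMod s) := fun j =>
    apply_eq_of_intCast_eq (s := s) (h := fun j => (w j : ZMod s)) (fun j => by simp [hw])
      (by rw [Int.cast_natCast, ZMod.natCast_zmod_val])
  have hinj : Function.Injective fun z : ZMod s => (w z.val : ZMod s) := by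
    intro x y hxy
    obtain ⟨k, hk⟩ := (ZMod.intCast_eq_intCast_iff_dvd_sub _ _ _).1 hxy
    have hwk : w (x.val + s * k) = w y.val := by
      rw [map_add_mul_of_map_add hw]
      linarith
    simpa using congrArg (Int.cast : ℤ → ZMod s) (w.injective hwk)
  exact ⟨Equiv.ofBijective _ (Finite.injective_iff_bijective.1 hinj), hcast⟩

lemma sum_range_comp_perm {h : ℤ → M} (hh : ∀ j, h (j + s) = h j) {w : Equiv.Perm ℤ}
    (hw : ∀ j, w (j + s) = w j + s) : ∑ i ∈ range s, h (w i) = ∑ i ∈ range s, h i := by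
  obtain ⟨σ, hσ⟩ := exists_perm_zmod hw
  rw [sum_range_eq_sum_zmod fun i => h (w i), sum_range_eq_sum_zmod h,
    ← Equiv.sum_comp σ fun z => h z.val]
  exact sum_congr rfl fun z _ => apply_eq_of_intCast_eq hh (by simp [hσ])

end Periodic

section AffineSymmetricGroup

variable {s : ℕ}

lemma sum_range_intCast (s : ℕ) : ∑ i ∈ range s, (i : ℤ) = s.choose 2 := by
  rw [← Nat.cast_sum, Finset.sum_range_id, Nat.choose_two_right]

lemma mem_affSymSet_iff {w : Equiv.Perm ℤ} :
    w ∈ AffSymSet s ↔ (∀ m : ℤ, w (m + s) = w m + s) ∧ ∑ i ∈ range s, (w i - (i : ℤ)) = 0 := by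
  rw [sum_sub_distrib, sum_range_intCast, sub_eq_zero]
  rfl

lemma one_mem_affSymSet : (1 : Equiv.Perm ℤ) ∈ AffSymSet s := by
  simp [mem_affSymSet_iff]

lemma mul_mem_affSymSet [NeZero s] {w v : Equiv.Perm ℤ} (hw : w ∈ AffSymSet s)
    (hv : v ∈ AffSymSet s) : w * v ∈ AffSymSet s := by
  rw [mem_affSymSet_iff] at *
  refine ⟨fun m => by simp [hv.1, hw.1], ?_⟩
  have hper : ∀ m, w (m + s) - (m + s) = w m - m := fun m => by rw [hw.1]; ring
  calc ∑ i ∈ range s, ((w * v) i - (i : ℤ))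
      = ∑ i ∈ range s, (w (v i) - v i) + ∑ i ∈ range s, (v i - (i : ℤ)) := by
        simp
    _ = 0 := by rw [sum_range_comp_perm (h := fun m => w m - m) hper hv.1, hw.2, hv.2, add_zero]

lemma genFun_of_intCast_eq {i m : ℤ} (h : (m : ZMod s) = i) : genFun s i m = m + 1 :=
  if_pos ((ZMod.intCast_eq_intCast_iff_dvd_sub _ _ _).1 h.symm)

lemma genFun_of_intCast_eq_add_one (hs : 2 ≤ s) {i m : ℤ} (h : (m : ZMod s) = i + 1) :
    genFun s i m = m - 1 := by
  have := genFun_involutive s hs i (m - 1)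
  rwa [genFun_of_intCast_eq (m := m - 1) (by simp [h]), sub_add_cancel] at this

lemma genFun_of_intCast_ne {i m : ℤ} (h : (m : ZMod s) ≠ i) (h' : (m : ZMod s) ≠ i + 1) :
    genFun s i m = m := by
  rw [genFun, if_neg, if_neg]
  · rwa [← ZMod.intCast_zmod_eq_zero_iff_dvd, Int.cast_sub, Int.cast_sub, sub_sub, sub_eq_zero,
      Int.cast_one]
  · rwa [← ZMod.intCast_zmod_eq_zero_iff_dvd, Int.cast_sub, sub_eq_zero]

lemma genFun_self (i : ℤ) : genFun s i i = i + 1 := genFun_of_intCast_eq rfl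

lemma genFun_add_one (hs : 2 ≤ s) (i : ℤ) : genFun s i (i + 1) = i := by
  simp [genFun_of_intCast_eq_add_one hs (i := i) (m := i + 1)]

lemma genFun_add_natCast (hs : 2 ≤ s) (i m : ℤ) : genFun s i (m + s) = genFun s i m + s := by
  by_cases h : (m : ZMod s) = i
  · rw [genFun_of_intCast_eq h, genFun_of_intCast_eq (by simpa using h)]
    ring
  by_cases h' : (m : ZMod s) = i + 1
  · rw [genFun_of_intCast_eq_add_one hs h', genFun_of_intCast_eq_add_one hs (by simpa using h')]
    ring
  · rw [genFun_of_intCast_ne h h', genFun_of_intCast_ne (by simpa using h) (by simpa using h')]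

lemma coe_genPerm (hs : 2 ≤ s) (i : ℤ) : ⇑(genPerm s hs i) = genFun s i := rfl

lemma genPerm_mul_self (hs : 2 ≤ s) (i : ℤ) : genPerm s hs i * genPerm s hs i = 1 :=
  Equiv.ext (genFun_involutive s hs i)

lemma genPerm_mem_affSymSet [NeZero s] (hs : 2 ≤ s) (i : ℤ) : genPerm s hs i ∈ AffSymSet s := by
  refine mem_affSymSet_iff.2 ⟨genFun_add_natCast hs i, ?_⟩
  rw [coe_genPerm, sum_range_eq_add (h := fun m => genFun s i m - m) hs
    (fun m => by simp [genFun_add_natCast hs]) i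
    (fun m h h' => by simp [genFun_of_intCast_ne h h']), genFun_self, genFun_add_one hs]
  ring

lemma comp_genFun_eq_self {d i : ℤ} {h : ℤ → ℤ} (hs : 2 ≤ s) (hh : ∀ j, h (j + s) = h j + d)
    (hi : h (i + 1) = h i) : h ∘ genFun s i = h := by
  have hstep : ∀ m : ℤ, (m : ZMod s) = i → h (m + 1) = h m := fun m hm => by
    obtain ⟨k, hk⟩ := (ZMod.intCast_eq_intCast_iff_dvd_sub _ _ _).1 hm.symm
    rw [show m + 1 = i + 1 + s * k by linarith, show m = i + s * k by linarith,
      map_add_mul_of_map_add hh, map_add_mul_of_map_add hh, hi]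
  funext m
  rw [Function.comp_apply]
  by_cases h1 : (m : ZMod s) = i
  · rw [genFun_of_intCast_eq h1, hstep m h1]
  by_cases h2 : (m : ZMod s) = i + 1
  · rw [genFun_of_intCast_eq_add_one hs h2, ← hstep (m - 1) (by simp [h2]), sub_add_cancel]
  · rw [genFun_of_intCast_ne h1 h2]

/-- A potential which drops whenever a descent of `h` is removed by a swap: up to the factor `s`,
the squared distance over one period from `h` to the linear map of the same slope `d / s`. -/
def energy (s : ℕ) (d : ℤ) (h : ℤ → ℤ) : ℤ := ∑ k ∈ range s, (s * h k - d * k) ^ 2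

lemma energy_comp_genFun_lt [NeZero s] {d i : ℤ} {h : ℤ → ℤ} (hs : 2 ≤ s) (hd : 0 < d)
    (hh : ∀ j, h (j + s) = h j + d) (hi : h (i + 1) < h i) :
    energy s d (h ∘ genFun s i) < energy s d h := by
  have hsum := sum_range_eq_add
    (h := fun k => (s * h (genFun s i k) - d * k) ^ 2 - (s * h k - d * k) ^ 2) hs
    (fun k => by simp only [genFun_add_natCast hs, hh]; ring) i
    (fun k h1 h2 => by simp [genFun_of_intCast_ne h1 h2])
  simp only [genFun_self, genFun_add_one hs, sum_sub_distrib] at hsum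
  have hgap : 0 < s * d * (h i - h (i + 1)) :=
    mul_pos (mul_pos (by positivity) hd) (sub_pos.2 hi)
  simp only [energy, Function.comp_apply]
  linarith

lemma descent_induction [NeZero s] {d : ℤ} {P : (ℤ → ℤ) → Prop} (hs : 2 ≤ s) (hd : 0 < d)
    (mono : ∀ h : ℤ → ℤ, (∀ j, h (j + s) = h j + d) → Monotone h → P h)
    (step : ∀ h : ℤ → ℤ, (∀ j, h (j + s) = h j + d) → ∀ i, h (i + 1) < h i →
      P (h ∘ genFun s i) → P h)
    {h : ℤ → ℤ} (hh : ∀ j, h (j + s) = h j + d) : P h := by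
  induction hn : (energy s d h).toNat using Nat.strong_induction_on generalizing h with
  | _ n ih =>
    by_cases hmono : ∀ i, h i ≤ h (i + 1)
    · exact mono h hh (monotone_int_of_le_succ hmono)
    push Not at hmono
    obtain ⟨i, hi⟩ := hmono
    have hnonneg : 0 ≤ energy s d (h ∘ genFun s i) := sum_nonneg fun k _ => sq_nonneg _
    have hlt := energy_comp_genFun_lt hs hd hh hi
    exact step h hh i hi
      (ih _ (by omega) (fun j => by simp [genFun_add_natCast hs, hh]) rfl)

lemma eq_one_of_monotone [NeZero s] {w : Equiv.Perm ℤ} (hw : w ∈ AffSymSet s)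
    (hmono : Monotone w) : w = 1 := by
  have hsucc : ∀ m, w (m + 1) = w m + 1 := fun m => by
    simpa using ((hmono.strictMono_of_injective w.injective).orderIsoOfSurjective _
      w.surjective).map_succ m
  have hshift : ∀ m, w m - m = w 0 := fun m => by
    rw [sub_eq_iff_eq_add]
    simpa using map_add_mul_of_map_add (s := 1) (d := 1) (by simpa using hsucc) 0 m
  have hzero : w 0 = 0 := by
    simpa [hshift, NeZero.ne, -sum_sub_distrib] using (mem_affSymSet_iff.1 hw).2
  ext m
  rw [Equiv.Perm.one_apply, ← sub_eq_zero, hshift, hzero]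

lemma affSymSet_descent_induction [NeZero s] (hs : 2 ≤ s) {P : Equiv.Perm ℤ → Prop} (one : P 1)
    (step : ∀ w ∈ AffSymSet s, ∀ i, w (i + 1) < w i → P (w * genPerm s hs i) → P w)
    {w : Equiv.Perm ℤ} (hw : w ∈ AffSymSet s) : P w := by
  refine descent_induction (s := s) (d := s)
    (P := fun h => ∀ w ∈ AffSymSet s, ⇑w = h → P w) hs (by positivity) ?_ ?_ hw.1 w hw rfl
  · rintro _ - hmono w hw rfl
    rwa [eq_one_of_monotone hw hmono]
  · rintro _ - i hi ih w hw rfl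
    exact step w hw i hi (ih _ (mul_mem_affSymSet hw (genPerm_mem_affSymSet hs i)) rfl)

lemma exists_monotone_comp [NeZero s] {d : ℤ} {h : ℤ → ℤ} (hs : 2 ≤ s) (hd : 0 < d)
    (hh : ∀ j, h (j + s) = h j + d) : ∃ w ∈ AffSymSet s, Monotone (h ∘ w) := by
  refine descent_induction (P := fun h => ∃ w ∈ AffSymSet s, Monotone (h ∘ w)) hs hd
    (fun h _ hmono => ⟨1, one_mem_affSymSet, hmono⟩) ?_ hh
  rintro h - i - ⟨w, hw, hmono⟩
  exact ⟨genPerm s hs i * w, mul_mem_affSymSet (genPerm_mem_affSymSet hs i) hw, hmono⟩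

lemma comp_eq_self_of_antitone [NeZero s] {d : ℤ} {h : ℤ → ℤ} (hs : 2 ≤ s)
    (hh : ∀ j, h (j + s) = h j + d) (hanti : Antitone h) {w : Equiv.Perm ℤ}
    (hw : w ∈ AffSymSet s) (hwanti : Antitone (h ∘ w)) : h ∘ w = h := by
  revert hwanti
  refine affSymSet_descent_induction hs (P := fun w => Antitone (h ∘ w) → h ∘ w = h)
    (fun _ => rfl) (fun w hw i hi ih hwanti => ?_) hw
  have hadd : ∀ j, (h ∘ w) (j + s) = (h ∘ w) j + d := fun j => by simp [hw.1, hh]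
  have hswap : h ∘ ⇑(w * genPerm s hs i) = h ∘ w :=
    comp_genFun_eq_self hs hadd (le_antisymm (hwanti (lt_add_one i).le) (hanti hi.le))
  rw [hswap] at ih
  exact ih hwanti

end AffineSymmetricGroup

section BetaSet

variable {p : Partn}

lemma lt_conjCount_iff (p : Partn) (i c : ℕ) : i < conjCount p c ↔ c < p.f i := by
  classical
  have hex : ∃ n, p.f n ≤ c := by
    obtain ⟨N, hN⟩ := p.eventually_zero
    exact ⟨N, by simp [hN]⟩
  have hiff : ∀ i, c < p.f i ↔ i < Nat.find hex := fun i => by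
    rw [Nat.lt_find_iff]
    exact ⟨fun h m hm => not_le.2 (h.trans_le (p.antitone hm)), fun h => not_le.1 (h i le_rfl)⟩
  have hcard : conjCount p c = Nat.find hex := by
    rw [conjCount, show {i : ℕ | c + 1 ≤ p.f i} = Set.Iio (Nat.find hex) from Set.ext hiff]
    simp
  rw [hcard, hiff]

lemma betaSet_eq_range (p : Partn) :
    betaSet p = Set.range fun i : ℕ => (p.f i : ℤ) - (i + 1) := by
  ext b
  simp [betaSet, eq_comm]

lemma sub_conjCount_notMem (p : Partn) (c : ℕ) : (c : ℤ) - conjCount p c ∉ betaSet p := by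
  rintro ⟨i, hi⟩
  have := lt_conjCount_iff p i c
  omega

lemma sub_conjCount_lt_iff (p : Partn) (i c : ℕ) :
    (c : ℤ) - conjCount p c < p.f i - (i + 1) ↔ c < p.f i := by
  have := lt_conjCount_iff p i c
  omega

lemma exists_eq_sub_conjCount {y : ℤ} (hy : y ∉ betaSet p) :
    ∃ c : ℕ, y = (c : ℤ) - conjCount p c := by
  classical
  have hex : ∃ i : ℕ, (p.f i : ℤ) - (i + 1) < y := by
    obtain ⟨N, hN⟩ := p.eventually_zero
    exact ⟨N + y.natAbs, by rw [hN _ (by omega)]; omega⟩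
  set i := Nat.find hex
  have hi : (p.f i : ℤ) - (i + 1) < y := Nat.find_spec hex
  have hmin : ∀ m < i, y < (p.f m : ℤ) - (m + 1) := fun m hm =>
    lt_of_le_of_ne (not_lt.1 (Nat.find_min hex hm)) fun h => hy ⟨m, h⟩
  have hle : i ≤ conjCount p (y + i).toNat := by
    rcases Nat.eq_zero_or_pos i with h0 | h0
    · omega
    · have hlt := lt_conjCount_iff p (i - 1) (y + i).toNat
      have hprev := hmin (i - 1) (by omega)
      omega
  have hge := lt_conjCount_iff p i (y + i).toNat
  exact ⟨(y + i).toNat, by omega⟩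

lemma isCore_iff_not_dvd_sub {u : ℕ} :
    IsCore u p ↔ ∀ b ∈ betaSet p, ∀ y ∉ betaSet p, y < b → ¬ (u : ℤ) ∣ b - y := by
  have hhook : ∀ r c, hookLen p r c = (p.f r - (r + 1)) - (c - conjCount p c) := fun r c => by
    rw [hookLen]
    ring
  constructor
  · rintro h b ⟨r, rfl⟩ y hy hlt
    obtain ⟨c, rfl⟩ := exists_eq_sub_conjCount hy
    rw [← hhook]
    exact h r c ((sub_conjCount_lt_iff p r c).1 hlt)
  · intro h r c hc
    rw [hhook]
    exact h _ ⟨r, rfl⟩ _ (sub_conjCount_notMem p c) ((sub_conjCount_lt_iff p r c).2 hc)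

lemma isCore_iff_sub_mem {u : ℕ} : IsCore u p ↔ ∀ b ∈ betaSet p, b - u ∈ betaSet p := by
  rw [isCore_iff_not_dvd_sub]
  constructor
  · intro h b hb
    by_contra hn
    have hne : b - u ≠ b := fun heq => hn (by rwa [heq])
    exact h b hb _ hn (by omega) (by simp)
  · rintro h b hb y hy hlt ⟨k, hk⟩
    have hmem : ∀ n : ℕ, b - u * n ∈ betaSet p := fun n => by
      induction n with
      | zero => simpa using hb
      | succ n ih => simpa [mul_add, sub_sub] using h _ ih
    have hk0 : 0 < k := pos_of_mul_pos_right (by omega : 0 < u * k) (by positivity)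
    lift k to ℕ using hk0.le
    exact hy (by simpa [← hk] using hmem k)

lemma betaSet_strictAnti (p : Partn) : StrictAnti fun i : ℕ => (p.f i : ℤ) - (i + 1) := by
  refine strictAnti_nat_of_succ_lt fun i => ?_
  have : p.f (i + 1) ≤ p.f i := p.antitone i.le_succ
  omega

lemma betaSet_injective : Function.Injective betaSet := by
  intro p q h
  rw [betaSet_eq_range, betaSet_eq_range] at h
  have hfun := (StrictMono.range_inj (betaSet_strictAnti p).dual_right
    (betaSet_strictAnti q).dual_right).1 h
  have hf : p.f = q.f := by
    ext i
    have hi : (p.f i : ℤ) - (i + 1) = q.f i - (i + 1) := congrFun hfun i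
    omega
  cases p
  cases q
  congr

/-- In the language of Maya diagrams: a beta-set has charge zero. -/
lemma exists_finset_betaSet (p : Partn) : ∃ A : Finset ℤ, (∀ b ∈ A, -(#A : ℤ) ≤ b) ∧
    ∀ b, b ∈ betaSet p ↔ b ∈ A ∨ b < -(#A : ℤ) := by
  obtain ⟨N, hN⟩ := p.eventually_zero
  have hcard : #((range N).image fun i : ℕ => (p.f i : ℤ) - (i + 1)) = N := by
    rw [card_image_of_injective _ (betaSet_strictAnti p).injective, card_range]
  refine ⟨(range N).image fun i : ℕ => (p.f i : ℤ) - (i + 1), ?_, fun b => ?_⟩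
  · simp only [hcard, mem_image, mem_range]
    rintro _ ⟨i, hi, rfl⟩
    omega
  · simp only [hcard, mem_image, mem_range]
    constructor
    · rintro ⟨i, rfl⟩
      refine or_iff_not_imp_left.2 fun hi => ?_
      have hNi : N ≤ i := not_lt.1 fun hlt => hi ⟨i, hlt, rfl⟩
      rw [hN i hNi]
      omega
    · rintro (⟨i, -, rfl⟩ | hb)
      · exact ⟨i, rfl⟩
      · exact ⟨(-b - 1).toNat, by rw [hN _ (by omega)]; omega⟩

lemma finsum_sSet {s : ℕ} (hp : IsCore s p) : ∑ᶠ x ∈ sSet s p, x = s.choose 2 := by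
  obtain ⟨A, hA, hB⟩ := exists_finset_betaSet p
  -- On the integers `≥ -#A`, the beta-set is `A` and its translate by `s` is `U`.
  set U := A.map (addRightEmbedding (s : ℤ)) ∪ Ico (-(#A : ℤ)) (s - #A) with hU
  have hAU : A ⊆ U := fun x hx => by
    have hmem := (hB _).1 (isCore_iff_sub_mem.1 hp x ((hB x).2 (.inl hx)))
    have hle := hA x hx
    simp only [hU, mem_union, mem_map, addRightEmbedding_apply, mem_Ico]
    exact hmem.imp (fun h => ⟨_, h, sub_add_cancel _ _⟩) fun h => by omega
  have hS : sSet s p = ↑(U \ A) := by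
    ext x
    have hle := hA (x - s)
    simp only [sSet, hB, hU, Set.mem_ofPred_eq, coe_sdiff, Set.mem_sdiff, mem_coe, mem_union,
      mem_map, addRightEmbedding_apply, mem_Ico, ← eq_sub_iff_add_eq, exists_eq_right]
    grind
  have hdisj : Disjoint (A.map (addRightEmbedding (s : ℤ))) (Ico (-(#A : ℤ)) (s - #A)) := by
    simp only [disjoint_left, mem_map, addRightEmbedding_apply, mem_Ico]
    rintro _ ⟨a, ha, rfl⟩
    have := hA a ha
    omega
  have hIco : ∑ x ∈ Ico (-(#A : ℤ)) (s - #A), x = ∑ k ∈ range s, ((k : ℤ) - #A) :=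
    sum_nbij' (fun x => (x + #A).toNat) (fun k => (k : ℤ) - #A)
      (by grind) (by grind) (by grind) (by grind) (by grind)
  have hsum : ∑ x ∈ U, x = ∑ a ∈ A, a + s.choose 2 := by
    rw [hU, sum_union hdisj, hIco, sum_map, sum_sub_distrib, sum_range_intCast]
    simp only [addRightEmbedding_apply, sum_add_distrib, sum_const, card_range, nsmul_eq_mul]
    ring
  rw [hS, finsum_mem_coe_finset]
  linarith [sum_sdiff (f := fun x => x) hAU]

lemma exists_betaSet_translate {B : Set ℤ} {L U : ℤ} (hL : ∀ b < L, b ∈ B)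
    (hU : ∀ b ∈ B, b < U) : ∃ (p : Partn) (d : ℤ), ∀ b, b ∈ betaSet p ↔ b + d ∈ B := by
  classical
  -- `Nat.nth P i` is the distance from `U - 1` down to the `i`-th largest element of `B`.
  set P : ℕ → Prop := fun n => U - 1 - n ∈ B
  set N := (U - L).toNat
  set C := Nat.count P N
  have hP : ∀ n, N ≤ n → P n := fun n hn => hL _ (by omega)
  have hinf : (Set.ofPred P).Infinite := (Set.Ici_infinite N).mono fun n hn => hP n hn
  have hnth : ∀ k, Nat.nth P (C + k) = N + k := fun k => by
    have hcount : Nat.count P (N + k) = C + k := by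
      rw [Nat.count_add, Nat.count_of_forall (p := fun n => P (N + n)) fun n _ => hP _ (by omega)]
    rw [← hcount, Nat.nth_count (hP _ (by omega))]
  have hmono := Nat.nth_strictMono hinf
  have hle : ∀ i, C + Nat.nth P i ≤ N + i := fun i => by
    simpa [hnth] using hmono.add_le_nat C i
  refine ⟨⟨fun i => N + i - (C + Nat.nth P i), antitone_nat_of_succ_le fun i => ?_, C,
    fun i hi => ?_⟩, U - N + C, fun b => ?_⟩
  · have : Nat.nth P i < Nat.nth P (i + 1) := hmono i.lt_succ_self
    omega
  · obtain ⟨k, rfl⟩ := Nat.exists_eq_add_of_le hi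
    rw [hnth]
    omega
  · have hmem : b + (U - N + C) ∈ B ↔ ∃ i, b + (U - N + C) = U - 1 - Nat.nth P i := by
      constructor
      · intro hb
        have hlt := hU _ hb
        obtain ⟨n, hn⟩ : ∃ n : ℕ, b + (U - N + C) = U - 1 - n :=
          ⟨(N - C - 1 - b).toNat, by omega⟩
        rw [hn] at hb ⊢
        obtain ⟨i, rfl⟩ := (Nat.range_nth_of_infinite hinf).ge hb
        exact ⟨i, rfl⟩
      · rintro ⟨i, hi⟩
        rw [hi]
        exact Nat.nth_mem_of_infinite hinf i
    rw [hmem]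
    refine exists_congr fun i => ?_
    have := hle i
    simp only
    omega

end BetaSet

/-- The profile of an `s`-core, an integer function which drops by `t` over each period `s` and
sums to zero over a period. In the profile the level-`t` action becomes precomposition. -/
structure IsProfile (s t : ℕ) (f : ℤ → ℤ) : Prop where
  map_add : ∀ j, f (j + s) = f j - t
  sum_eq_zero : ∑ i ∈ range s, f i = 0

/-- `f` records the beta-set of `p` runner by runner on the `s`-abacus, with `f j` the position of
the first gap in the residue class of `j * t - c` modulo `s`. The level-`t` action uses the offset
`c = lc s t`; other offsets appear for translates of a beta-set. -/
def Encodes (s t : ℕ) (c : ℤ) (p : Partn) (f : ℤ → ℤ) : Prop :=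
  ∀ j m : ℤ, j * t - c + s * m ∈ betaSet p ↔ m < f j

section Encoding

variable {s t : ℕ} {c : ℤ} {p q : Partn} {f g : ℤ → ℤ}

lemma IsProfile.map_add_mul (hf : IsProfile s t f) (j k : ℤ) : f (j + s * k) = f j - k * t := by
  rw [map_add_mul_of_map_add (d := -t) hf.map_add]
  ring

lemma two_mul_lc (hst : s.Coprime t) : 2 * lc s t = ((s : ℤ) - 1) * (t - 1) := by
  refine Int.mul_ediv_cancel' (even_iff_two_dvd.1 ?_)
  have hodd : ¬(Even s ∧ Even t) := fun h =>
    Nat.not_coprime_of_dvd_of_dvd one_lt_two h.1.two_dvd h.2.two_dvd hst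
  simp only [Int.even_mul, Int.even_sub_one, Int.even_coe_nat]
  tauto

lemma sum_mul_sub_lc (hst : s.Coprime t) :
    ∑ i ∈ range s, ((i : ℤ) * t - lc s t) = s.choose 2 := by
  have hchoose : 2 * (s.choose 2 : ℤ) = s * (s - 1) := by
    qify
    rw [Nat.cast_choose_two]
    ring
  rw [sum_sub_distrib, ← sum_mul, sum_range_intCast, sum_const, card_range, nsmul_eq_mul]
  refine mul_left_cancel₀ two_ne_zero ?_
  linear_combination (t - 1 : ℤ) * hchoose - s * two_mul_lc hst

lemma dvd_mul_iff_of_coprime (hst : s.Coprime t) {a : ℤ} : (s : ℤ) ∣ a * t ↔ (s : ℤ) ∣ a :=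
  ⟨(Nat.isCoprime_iff_coprime.2 hst).dvd_of_dvd_mul_right, fun h => h.mul_right _⟩

lemma exists_eq_mul_sub_add [NeZero s] (hst : s.Coprime t) (c b : ℤ) :
    ∃ i < s, ∃ m : ℤ, b = (i : ℤ) * t - c + s * m := by
  obtain ⟨u, v, huv⟩ := Nat.isCoprime_iff_coprime.2 hst
  obtain ⟨i, hi⟩ := Int.eq_ofNat_of_zero_le (Int.emod_nonneg ((b + c) * v) (NeZero.ne (s : ℤ)))
  have hlt := Int.emod_lt_of_pos ((b + c) * v) (Nat.cast_pos.2 (NeZero.pos s))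
  refine ⟨i, by omega, (b + c) * u + (b + c) * v / s * t, ?_⟩
  linear_combination (-t : ℤ) * Int.emod_add_mul_ediv ((b + c) * v) s - (b + c) * huv + (t : ℤ) * hi

namespace Encodes

lemma partn_eq [NeZero s] (hst : s.Coprime t) (hp : Encodes s t c p f) (hq : Encodes s t c q f) :
    p = q := by
  refine betaSet_injective (Set.ext fun b => ?_)
  obtain ⟨i, -, m, rfl⟩ := exists_eq_mul_sub_add hst c b
  rw [hp, hq]

lemma profile_eq (hf : Encodes s t c p f) (hg : Encodes s t c p g) : f = g :=
  funext fun j => eq_of_forall_lt_iff fun m => by rw [← hf, hg]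

lemma mem_sSet_iff (hf : Encodes s t c p f) (j m : ℤ) :
    j * t - c + s * m ∈ sSet s p ↔ m = f j := by
  have hsub : j * t - c + s * m - s = j * t - c + s * (m - 1) := by ring
  rw [sSet, Set.mem_ofPred_eq, hsub, hf, hf]
  omega

lemma map_add (hf : Encodes s t c p f) (j : ℤ) : f (j + s) = f j - t :=
  eq_of_forall_lt_iff fun m => by
    rw [← hf, lt_sub_iff_add_lt, ← hf]
    ring_nf

lemma isCore [NeZero s] (hst : s.Coprime t) (hf : Encodes s t c p f) : IsCore s p := by
  refine isCore_iff_sub_mem.2 fun b hb => ?_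
  obtain ⟨i, -, m, rfl⟩ := exists_eq_mul_sub_add hst c b
  have hsub : i * (t : ℤ) - c + s * m - s = i * t - c + s * (m - 1) := by ring
  rw [hf] at hb
  rw [hsub, hf]
  omega

lemma isCore_iff_antitone [NeZero s] (hst : s.Coprime t) (hf : Encodes s t c p f) :
    IsCore t p ↔ Antitone f := by
  have hsub : ∀ j m : ℤ, j * t - c + s * m - t = (j - 1) * t - c + s * m := fun j m => by ring
  rw [isCore_iff_sub_mem]
  constructor
  · refine fun h => antitone_int_of_succ_le fun j => le_of_forall_lt fun m hm => ?_
    have hmem := h _ ((hf _ _).2 hm)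
    rwa [hsub, hf, add_sub_cancel_right] at hmem
  · intro h b hb
    obtain ⟨i, -, m, rfl⟩ := exists_eq_mul_sub_add hst c b
    rw [hf] at hb
    rw [hsub, hf]
    exact hb.trans_le (h (sub_one_lt _).le)

lemma sSet_eq_image [NeZero s] (hst : s.Coprime t) (hf : Encodes s t c p f) :
    sSet s p = (fun i : ℕ => (i : ℤ) * t - c + s * f i) '' range s := by
  ext b
  constructor
  · intro hb
    obtain ⟨i, hi, m, rfl⟩ := exists_eq_mul_sub_add hst c b
    obtain rfl := (hf.mem_sSet_iff _ _).1 hb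
    exact ⟨i, by simpa using hi, rfl⟩
  · rintro ⟨i, -, rfl⟩
    exact (hf.mem_sSet_iff _ _).2 rfl

lemma sSet_eq_range [NeZero s] (hst : s.Coprime t) (hf : Encodes s t c p f) :
    sSet s p = Set.range fun j : ℤ => j * t - c + s * f j := by
  refine Set.Subset.antisymm ?_ (Set.range_subset_iff.2 fun j => (hf.mem_sSet_iff _ _).2 rfl)
  rw [hf.sSet_eq_image hst]
  rintro _ ⟨i, -, rfl⟩
  exact ⟨i, rfl⟩

lemma sum_eq_sub_lc [NeZero s] (hst : s.Coprime t) (hf : Encodes s t c p f) :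
    ∑ i ∈ range s, f i = c - lc s t := by
  have hinj : Set.InjOn (fun i : ℕ => (i : ℤ) * t - c + s * f i) (range s) := by
    intro i hi j hj hij
    have hdvd : (s : ℤ) ∣ i - j :=
      (dvd_mul_iff_of_coprime hst).1 ⟨f j - f i, by linear_combination hij⟩
    rw [coe_range, Set.mem_Iio] at hi hj
    have := Int.eq_zero_of_abs_lt_dvd hdvd (by rw [abs_lt]; omega)
    omega
  have hsum : ∑ i ∈ range s, ((i : ℤ) * t - c + s * f i) = s.choose 2 := by
    rw [← finsum_sSet (hf.isCore hst), hf.sSet_eq_image hst, finsum_mem_image hinj,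
      finsum_mem_coe_finset]
  have hlc := sum_mul_sub_lc hst
  simp only [sum_add_distrib, sum_sub_distrib, sum_const, card_range, nsmul_eq_mul,
    ← mul_sum] at hsum hlc
  exact mul_left_cancel₀ (NeZero.ne (s : ℤ)) (by linear_combination hsum - hlc)

lemma isProfile [NeZero s] (hst : s.Coprime t) (hf : Encodes s t (lc s t) p f) :
    IsProfile s t f :=
  ⟨hf.map_add, by rw [hf.sum_eq_sub_lc hst, sub_self]⟩

end Encodes

lemma IsCore.exists_forall_mem_betaSet_iff [NeZero s] (hp : IsCore s p) (y : ℤ) :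
    ∃ k, ∀ m : ℤ, y + s * m ∈ betaSet p ↔ m < k := by
  obtain ⟨A, -, hB⟩ := exists_finset_betaSet p
  have hs : (0 : ℤ) < s := Nat.cast_pos.2 (NeZero.pos s)
  have hupper : ∀ m, y + s * m ∈ betaSet p → m ≤ (p.f 0 - (0 + 1) - y) / s := by
    rintro m ⟨i, hi⟩
    have hle := (betaSet_strictAnti p).antitone i.zero_le
    rw [Int.le_ediv_iff_mul_le hs]
    simp only [Nat.cast_zero] at hle
    linarith
  have hlower : y + s * ((-(#A : ℤ) - 1 - y) / s) ∈ betaSet p :=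
    (hB _).2 (.inr (by linarith [Int.mul_ediv_self_le (x := -(#A : ℤ) - 1 - y) hs.ne']))
  obtain ⟨g, hg, hmax⟩ := Int.exists_greatest_of_bdd ⟨_, hupper⟩ ⟨_, hlower⟩
  have hmem : ∀ n : ℕ, y + s * (g - n) ∈ betaSet p := fun n => by
    induction n with
    | zero => simpa using hg
    | succ n ih =>
      simpa [mul_sub, mul_add, ← sub_sub, add_sub_assoc] using isCore_iff_sub_mem.1 hp _ ih
  refine ⟨g + 1, fun m => ⟨fun h => Int.lt_add_one_of_le (hmax m h), fun h => ?_⟩⟩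
  obtain ⟨n, hn⟩ := Int.eq_ofNat_of_zero_le (show 0 ≤ g - m by omega)
  simpa [← hn] using hmem n

lemma IsCore.exists_encodes [NeZero s] (hp : IsCore s p) (t : ℕ) (c : ℤ) :
    ∃ f, Encodes s t c p f := by
  choose k hk using hp.exists_forall_mem_betaSet_iff
  exact ⟨fun j => k (j * t - c), fun j => hk _⟩

lemma IsProfile.exists_encodes [NeZero s] (hst : s.Coprime t) (hf : IsProfile s t f) :
    ∃ p, Encodes s t (lc s t) p f := by
  have hs : (0 : ℤ) < s := Nat.cast_pos.2 (NeZero.pos s)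
  set B : Set ℤ := {b | ∃ j m : ℤ, b = j * t - lc s t + s * m ∧ m < f j}
  have hmem : ∀ j m : ℤ, j * t - lc s t + s * m ∈ B ↔ m < f j := by
    refine fun j m => ⟨?_, fun h => ⟨j, m, rfl, h⟩⟩
    rintro ⟨j', m', heq, hlt⟩
    obtain ⟨k, hk⟩ : (s : ℤ) ∣ j' - j :=
      (dvd_mul_iff_of_coprime hst).1 ⟨m - m', by linear_combination -heq⟩
    obtain rfl : j' = j + s * k := by linarith
    have hm : m = m' + k * t := mul_left_cancel₀ hs.ne' (by linear_combination heq)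
    rw [hf.map_add_mul] at hlt
    linarith
  obtain ⟨L, hL⟩ := ((range s).image fun i : ℕ => (i : ℤ) * t - lc s t + s * f i).bddBelow
  obtain ⟨U, hU⟩ := ((range s).image fun i : ℕ => (i : ℤ) * t - lc s t + s * f i).bddAbove
  simp only [mem_lowerBounds, mem_upperBounds, mem_coe, forall_mem_image, mem_range] at hL hU
  obtain ⟨p, d, hp⟩ := exists_betaSet_translate (B := B) (L := L) (U := U)
    (fun b hb => by
      obtain ⟨i, hi, m, rfl⟩ := exists_eq_mul_sub_add hst (lc s t) b
      have := lt_of_mul_lt_mul_left (by linarith [hL hi] : s * m < s * f i) hs.le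
      rwa [hmem])
    (fun b hb => by
      obtain ⟨i, hi, m, rfl⟩ := exists_eq_mul_sub_add hst (lc s t) b
      rw [hmem] at hb
      linarith [hU hi, mul_lt_mul_of_pos_left hb hs])
  have henc : Encodes s t (lc s t + d) p f := fun j m => by
    rw [hp, ← hmem]
    ring_nf
  have hd : d = 0 := by simpa [hf.sum_eq_zero] using (henc.sum_eq_sub_lc hst).symm
  rw [hd, add_zero] at henc
  exact ⟨p, henc⟩

end Encoding

section LevelAction

variable {s t : ℕ} {p : Partn} {f : ℤ → ℤ} {Φ : Equiv.Perm ℤ → Equiv.Perm ℤ} {w : Equiv.Perm ℤ}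

lemma levelAction_genPerm (hs : 2 ≤ s) (hst : s.Coprime t) (hΦ : IsLevelTAction s t hs Φ)
    (i j m : ℤ) :
    Φ (genPerm s hs i) (j * t - lc s t + s * m) = genPerm s hs i j * t - lc s t + s * m := by
  have hdvd : ∀ k : ℤ, (s : ℤ) ∣ j * t - lc s t + s * m - (k * t - lc s t) ↔ (s : ℤ) ∣ j - k :=
    fun k => by
      rw [show j * t - lc s t + s * m - (k * t - lc s t) = (j - k) * t + s * m by ring,
        dvd_add_left (dvd_mul_right _ _), dvd_mul_iff_of_coprime hst]
  have hgen := hΦ.2 (i + 1) (j * t - lc s t + s * m)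
  rw [add_sub_cancel_right] at hgen
  rw [hgen, coe_genPerm, levelGenFun, genFun, add_sub_cancel_right]
  simp only [hdvd, sub_sub]
  split_ifs <;> ring

lemma levelAction_apply [NeZero s] (hs : 2 ≤ s) (hst : s.Coprime t)
    (hΦ : IsLevelTAction s t hs Φ) (hw : w ∈ AffSymSet s) (j m : ℤ) :
    Φ w (j * t - lc s t + s * m) = w j * t - lc s t + s * m := by
  have hone : Φ 1 = 1 := by
    have := hΦ.1 1 1 one_mem_affSymSet one_mem_affSymSet
    rwa [mul_one, left_eq_mul] at this
  revert j m
  refine affSymSet_descent_induction hs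
    (P := fun w => ∀ j m, Φ w (j * t - lc s t + s * m) = w j * t - lc s t + s * m)
    (by simp [hone]) (fun w hw i _ ih j m => ?_) hw
  have hgen := genPerm_mem_affSymSet hs i
  have hcancel : w = w * genPerm s hs i * genPerm s hs i := by
    rw [mul_assoc, genPerm_mul_self, mul_one]
  conv_lhs => rw [hcancel, hΦ.1 _ _ (mul_mem_affSymSet hw hgen) hgen, Equiv.Perm.mul_apply,
    levelAction_genPerm hs hst hΦ, ih, ← Equiv.Perm.mul_apply, ← hcancel]

lemma image_sSet_eq_iff [NeZero s] (hs : 2 ≤ s) (hst : s.Coprime t)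
    (hΦ : IsLevelTAction s t hs Φ) (hf : Encodes s t (lc s t) p f) (hw : w ∈ AffSymSet s) :
    ⇑(Φ w) '' sSet s p = sSet s p ↔ f ∘ w = f := by
  have himage : ⇑(Φ w) '' sSet s p = Set.range fun j => w j * t - lc s t + s * f j := by
    rw [hf.sSet_eq_range hst, ← Set.range_comp]
    exact congrArg Set.range (funext fun j => levelAction_apply hs hst hΦ hw _ _)
  constructor
  · refine fun h => funext fun j => ((hf.mem_sSet_iff _ _).1 ?_).symm
    rw [← h, himage]
    exact ⟨j, rfl⟩
  · intro h
    rw [himage, hf.sSet_eq_range hst,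
      ← w.surjective.range_comp fun j => j * t - lc s t + s * f j]
    exact congrArg Set.range (funext fun j => by simp [show f (w j) = f j from congrFun h j])

end LevelAction

/-- The reduction of a profile to a map from residues modulo `s` to residues modulo `t`, read off
from the window `0, …, s - 1`. -/
def profileMod (s t : ℕ) (f : ℤ → ℤ) (z : ZMod s) : ZMod t := (f z.val : ZMod t)

lemma exists_profileMod_eq {s t : ℕ} [NeZero s] [NeZero t] {g : ZMod s → ZMod t}
    (hg : ∑ z, g z = 0) : ∃ f, IsProfile s t f ∧ profileMod s t f = g := by
  set S : ℤ := ∑ z, ((g z).val : ℤ) with hS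
  have hS0 : (S : ZMod t) = 0 := by simpa [hS] using hg
  set f : ℤ → ℤ := fun j => (g j).val - (Pi.single 0 S : ZMod s → ℤ) j - t * (j / s) with hf
  have hval : ∀ z : ZMod s, f z.val = (g z).val - (Pi.single 0 S : ZMod s → ℤ) z := fun z => by
    have hdiv : (z.val : ℤ) / s = 0 :=
      Int.ediv_eq_zero_of_lt (by positivity) (by exact_mod_cast z.val_lt)
    simp only [hf, hdiv, Int.cast_natCast, ZMod.natCast_zmod_val, mul_zero, sub_zero]
  refine ⟨f, ⟨fun j => ?_, ?_⟩, funext fun z => ?_⟩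
  · simp only [hf, Int.add_ediv_of_dvd_right dvd_rfl, Int.ediv_self (NeZero.ne (s : ℤ)),
      Int.cast_add, Int.cast_natCast, CharP.cast_eq_zero, add_zero]
    ring
  · simp only [sum_range_eq_sum_zmod, hval]
    simp [hS]
  · have hsingle : ((Pi.single 0 S : ZMod s → ℤ) z : ZMod t) = 0 := by
      rcases eq_or_ne z 0 with rfl | hz
      · simpa using hS0
      · simp [hz]
    rw [profileMod, hval, Int.cast_sub, hsingle]
    simp

namespace IsProfile

variable {s t : ℕ} {f g : ℤ → ℤ} {w : Equiv.Perm ℤ}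

lemma eq_of_apply_eq [NeZero t] (hf : IsProfile s t f) {a b : ℤ} (hab : (a : ZMod s) = b)
    (h : f a = f b) : a = b := by
  obtain ⟨k, hk⟩ := (ZMod.intCast_eq_intCast_iff_dvd_sub _ _ _).1 hab
  obtain rfl : b = a + s * k := by linarith
  rw [hf.map_add_mul] at h
  have hk0 : k = 0 := by simpa [NeZero.ne] using h.symm
  simp [hk0]

variable [NeZero s]

lemma profileMod_intCast (hf : IsProfile s t f) (j : ℤ) : profileMod s t f j = f j :=
  apply_eq_of_intCast_eq (s := s) (h := fun j => (f j : ZMod t)) (fun j => by simp [hf.map_add])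
    (by simp)

lemma profileMod_comp (hf : IsProfile s t f) {σ : Equiv.Perm (ZMod s)}
    (hσ : ∀ j : ℤ, (w j : ZMod s) = σ j) : profileMod s t (f ∘ w) = profileMod s t f ∘ σ := by
  ext z
  have hz := hf.profileMod_intCast (w z.val)
  rw [hσ, Int.cast_natCast, ZMod.natCast_zmod_val] at hz
  exact hz.symm

lemma sum_profileMod (hf : IsProfile s t f) : ∑ z, profileMod s t f z = 0 := by
  have hsum := hf.sum_eq_zero
  rw [sum_range_eq_sum_zmod] at hsum
  simpa [profileMod] using congrArg (Int.cast : ℤ → ZMod t) hsum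

lemma sum_comp_add_sum_sub (hf : IsProfile s t f) (hw : ∀ j, w (j + s) = w j + s) :
    s * ∑ i ∈ range s, f (w i) + t * ∑ i ∈ range s, (w i - (i : ℤ)) = 0 := by
  have hsum := sum_range_comp_perm (h := fun j => s * f j + t * j)
    (fun j => by rw [hf.map_add]; ring) hw
  simp only [sum_add_distrib, ← mul_sum, hf.sum_eq_zero] at hsum
  rw [sum_sub_distrib]
  linarith

lemma comp (hf : IsProfile s t f) (hw : w ∈ AffSymSet s) : IsProfile s t (f ∘ w) := by
  refine ⟨fun j => by simp [hw.1, hf.map_add], ?_⟩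
  have hsum := hf.sum_comp_add_sum_sub hw.1
  rw [(mem_affSymSet_iff.1 hw).2] at hsum
  simpa [NeZero.ne] using hsum

lemma exists_apply_eq (hf : IsProfile s t f) {z : ZMod s} {v : ℤ} (h : profileMod s t f z = v) :
    ∃ n : ℤ, (n : ZMod s) = z ∧ f n = v := by
  obtain ⟨k, hk⟩ := (ZMod.intCast_eq_intCast_iff_dvd_sub _ _ _).1 h
  refine ⟨z.val + s * -k, by simp, ?_⟩
  rw [hf.map_add_mul]
  linarith

lemma exists_comp_mem_affSymSet_antitone [NeZero t] (hs : 2 ≤ s) (hf : IsProfile s t f) :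
    ∃ w ∈ AffSymSet s, Antitone (f ∘ w) := by
  obtain ⟨w, hw, hmono⟩ := exists_monotone_comp (h := -f) (d := t) hs
    (Nat.cast_pos.2 (NeZero.pos t)) fun j => by simp [hf.map_add]; ring
  exact ⟨w, hw, fun i j hij => neg_le_neg_iff.1 (hmono hij)⟩

variable [NeZero t]

lemma exists_lift (hf : IsProfile s t f) (hg : IsProfile s t g) {σ : Equiv.Perm (ZMod s)}
    (hσ : profileMod s t g ∘ σ = profileMod s t f) :
    ∃ w ∈ AffSymSet s, g ∘ w = f ∧ ∀ j : ℤ, (w j : ZMod s) = σ j := by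
  have hσ' : profileMod s t f ∘ σ.symm = profileMod s t g := by
    rw [← hσ, Function.comp_assoc, σ.self_comp_symm, Function.comp_id]
  choose w hw hgw using fun j : ℤ => hg.exists_apply_eq (z := σ j) (v := f j)
    (by rw [← hf.profileMod_intCast, ← hσ, Function.comp_apply])
  choose v hv hfv using fun j : ℤ => hf.exists_apply_eq (z := σ.symm j) (v := g j)
    (by rw [← hg.profileMod_intCast, ← hσ', Function.comp_apply])
  let W : Equiv.Perm ℤ :=
    ⟨w, v, fun j => hf.eq_of_apply_eq (by rw [hv, hw, σ.symm_apply_apply]) (by rw [hfv, hgw]),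
      fun j => hg.eq_of_apply_eq (by rw [hw, hv, σ.apply_symm_apply]) (by rw [hgw, hfv])⟩
  have hadd : ∀ j, W (j + s) = W j + s := fun j =>
    hg.eq_of_apply_eq (by simp [W, hw]) (by simp [W, hgw, hg.map_add, hf.map_add])
  refine ⟨W, mem_affSymSet_iff.2 ⟨hadd, ?_⟩, funext hgw, hw⟩
  have hsum := hg.sum_comp_add_sum_sub hadd
  rw [show ∑ i ∈ range s, g (W i) = 0 by simp [W, hgw, hf.sum_eq_zero]] at hsum
  simpa [NeZero.ne, -sum_sub_distrib] using hsum

lemma eq_of_antitone (hs : 2 ≤ s) (hf : IsProfile s t f) (hg : IsProfile s t g)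
    (hfanti : Antitone f) (hganti : Antitone g) {σ : Equiv.Perm (ZMod s)}
    (hσ : profileMod s t g ∘ σ = profileMod s t f) : f = g := by
  obtain ⟨w, hw, rfl, -⟩ := hf.exists_lift hg hσ
  exact comp_eq_self_of_antitone (d := -t) hs hg.map_add hganti hw hfanti

lemma card_comp_eq_self (hf : IsProfile s t f) :
    Nat.card {w : Equiv.Perm ℤ // w ∈ AffSymSet s ∧ f ∘ w = f} =
      Nat.card {σ : Equiv.Perm (ZMod s) // profileMod s t f ∘ σ = profileMod s t f} := by
  choose w hw hfw hσ using fun σ : {σ : Equiv.Perm (ZMod s) //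
    profileMod s t f ∘ σ = profileMod s t f} => hf.exists_lift hf σ.2
  refine (Nat.card_eq_of_bijective (fun σ => ⟨w σ, hw σ, hfw σ⟩) ⟨fun σ τ h => ?_, ?_⟩).symm
  · have hwστ : w σ = w τ := congrArg Subtype.val h
    ext z
    simpa [hwστ, hσ τ] using (hσ σ z.val).symm
  · rintro ⟨v, hv, hfv⟩
    obtain ⟨σ, hvσ⟩ := exists_perm_zmod hv.1
    refine ⟨⟨σ, by rw [← hf.profileMod_comp hvσ, hfv]⟩, Subtype.ext (Equiv.ext fun j => ?_)⟩
    exact hf.eq_of_apply_eq (by rw [hσ, hvσ])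
      ((congrFun (hfw _) j).trans (congrFun hfv j).symm)

end IsProfile

section OrbitCounting

/-- The maps `ι → A` of sum zero, with the permutations of `ι` acting by precomposition. -/
def zeroSumMaps (ι A : Type*) [Fintype ι] [AddCommMonoid A] :
    SubMulAction (Equiv.Perm ι)ᵈᵐᵃ (ι → A) where
  carrier := {g | ∑ i, g i = 0}
  smul_mem' σ g hg := by
    simpa [DomMulAct.smul_apply] using (Equiv.sum_comp (DomMulAct.mk.symm σ) g).trans hg

lemma card_zeroSumMaps (ι A : Type*) [Fintype ι] [Nonempty ι] [AddCommGroup A] :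
    Nat.card (zeroSumMaps ι A) = Nat.card A ^ (Fintype.card ι - 1) := by
  classical
  obtain ⟨a⟩ := ‹Nonempty ι›
  have hbij : Function.Bijective
      fun (g : zeroSumMaps ι A) (i : {i // i ≠ a}) => g.1 i := by
    constructor
    · intro g h hgh
      have hne : ∀ i : {i // i ≠ a}, g.1 i = h.1 i := congrFun hgh
      have hsum : ∑ i, g.1 i = ∑ i, h.1 i := g.2.trans h.2.symm
      simp only [Fintype.sum_eq_add_sum_subtype_ne _ a, hne, add_left_inj] at hsum
      exact Subtype.ext (funext fun i => if hi : i = a then hi ▸ hsum else hne ⟨i, hi⟩)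
    · intro k
      let g : ι → A := fun i => if hi : i = a then -∑ j, k j else k ⟨i, hi⟩
      have hg : ∀ i : {i // i ≠ a}, g i = k i := fun i => dif_neg i.2
      refine ⟨⟨g, ?_⟩, funext hg⟩
      change ∑ i, g i = 0
      simp only [Fintype.sum_eq_add_sum_subtype_ne _ a, hg]
      simp [g]
  rw [Nat.card_eq_of_bijective _ hbij, Nat.card_fun]
  simp

lemma card_stabilizer_zeroSumMaps {ι A : Type*} [Fintype ι] [AddCommMonoid A]
    (g : zeroSumMaps ι A) :
    Nat.card (MulAction.stabilizer (Equiv.Perm ι)ᵈᵐᵃ g) =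
      Nat.card {σ : Equiv.Perm ι // g.1 ∘ σ = g.1} := by
  rw [SubMulAction.stabilizer_of_subMul]
  exact Nat.card_congr (DomMulAct.mk.symm.subtypeEquiv fun σ => DomMulAct.mem_stabilizer_iff)

lemma orbit_zeroSumMaps_eq_iff {ι A : Type*} [Fintype ι] [AddCommMonoid A]
    {g h : zeroSumMaps ι A} :
    (Quotient.mk'' g : MulAction.orbitRel.Quotient (Equiv.Perm ι)ᵈᵐᵃ (zeroSumMaps ι A)) =
      Quotient.mk'' h ↔ ∃ σ : Equiv.Perm ι, h.1 ∘ σ = g.1 := by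
  rw [Quotient.eq'', MulAction.orbitRel_apply, SubMulAction.mem_orbit_subMul_iff]
  exact DomMulAct.mk.symm.exists_congr_left

lemma finsum_one_div_card_stabilizer {G α C K : Type*} [Group G] [Finite G] [MulAction G α]
    [Finite α] [Field K] [CharZero K] {φ : C → α}
    (hφ : Function.Bijective fun c => (Quotient.mk'' (φ c) : MulAction.orbitRel.Quotient G α)) :
    ∑ᶠ c, (1 : K) / Nat.card (MulAction.stabilizer G (φ c)) = Nat.card α / Nat.card G := by
  have := Fintype.ofFinite (MulAction.orbitRel.Quotient G α)
  set e := Equiv.ofBijective _ hφ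
  have hsection : Function.LeftInverse Quotient.mk'' (φ ∘ e.symm) := e.apply_symm_apply
  have hcard : ∀ a : α, (1 : K) / Nat.card (MulAction.stabilizer G a) =
      Nat.card (G ⧸ MulAction.stabilizer G a) / Nat.card G := fun a => by
    rw [(MulAction.stabilizer G a).card_eq_card_quotient_mul_card_subgroup]
    have hstab : (Nat.card (MulAction.stabilizer G a) : K) ≠ 0 :=
      Nat.cast_ne_zero.2 Nat.card_pos.ne'
    have hquot : (Nat.card (G ⧸ MulAction.stabilizer G a) : K) ≠ 0 :=
      Nat.cast_ne_zero.2 Nat.card_pos.ne'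
    rw [Nat.cast_mul]
    field_simp
  rw [← finsum_comp_equiv e.symm, finsum_eq_sum_of_fintype,
    Nat.card_congr (MulAction.selfEquivSigmaOrbitsQuotientStabilizer' G α hsection), Nat.card_sigma,
    Nat.cast_sum, sum_div]
  exact sum_congr rfl fun ω _ => hcard _

end OrbitCounting

section CoreCounting

variable {s t : ℕ} [NeZero s] [NeZero t]

lemma exists_antitone_profileMod_eq_comp (hs : 2 ≤ s) {g : ZMod s → ZMod t} (hg : ∑ z, g z = 0) :
    ∃ f, IsProfile s t f ∧ Antitone f ∧ ∃ σ : Equiv.Perm (ZMod s), g ∘ σ = profileMod s t f := by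
  obtain ⟨f, hf, rfl⟩ := exists_profileMod_eq hg
  obtain ⟨w, hw, hanti⟩ := hf.exists_comp_mem_affSymSet_antitone hs
  obtain ⟨σ, hσ⟩ := exists_perm_zmod hw.1
  exact ⟨_, hf.comp hw, hanti, σ, (hf.profileMod_comp hσ).symm⟩

lemma bijective_orbit_profileMod (hs : 2 ≤ s) (hst : s.Coprime t)
    {f : {p // IsCore s p ∧ IsCore t p} → ℤ → ℤ} (hf : ∀ p, Encodes s t (lc s t) p.1 (f p))
    {g : {p // IsCore s p ∧ IsCore t p} → zeroSumMaps (ZMod s) (ZMod t)}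
    (hg : ∀ p, (g p).1 = profileMod s t (f p)) :
    Function.Bijective fun p => (Quotient.mk'' (g p) :
      MulAction.orbitRel.Quotient (Equiv.Perm (ZMod s))ᵈᵐᵃ (zeroSumMaps (ZMod s) (ZMod t))) := by
  have hanti : ∀ p, Antitone (f p) := fun p => ((hf p).isCore_iff_antitone hst).1 p.2.2
  constructor
  · intro p q hpq
    obtain ⟨σ, hσ⟩ := orbit_zeroSumMaps_eq_iff.1 hpq
    rw [hg, hg] at hσ
    have hfpq : f p = f q :=
      ((hf p).isProfile hst).eq_of_antitone hs ((hf q).isProfile hst) (hanti p) (hanti q) hσ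
    exact Subtype.ext ((hf p).partn_eq hst (hfpq ▸ hf q))
  · intro ω
    obtain ⟨h, rfl⟩ := Quotient.mk''_surjective ω
    obtain ⟨k, hk, hkanti, hσ⟩ := exists_antitone_profileMod_eq_comp hs h.2
    obtain ⟨p, hp⟩ := hk.exists_encodes hst
    refine ⟨⟨p, hp.isCore hst, (hp.isCore_iff_antitone hst).2 hkanti⟩, ?_⟩
    rw [orbit_zeroSumMaps_eq_iff, hg, (hf _).profile_eq hp]
    exact hσ

lemma card_stabilizer_core {p : Partn} {f : ℤ → ℤ} {Φ : Equiv.Perm ℤ → Equiv.Perm ℤ}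
    (hs : 2 ≤ s) (hst : s.Coprime t) (hΦ : IsLevelTAction s t hs Φ)
    (hf : Encodes s t (lc s t) p f) :
    Nat.card {w : Equiv.Perm ℤ // w ∈ AffSymSet s ∧ ⇑(Φ w) '' sSet s p = sSet s p} =
      Nat.card {σ : Equiv.Perm (ZMod s) // profileMod s t f ∘ σ = profileMod s t f} := by
  rw [← (hf.isProfile hst).card_comp_eq_self]
  exact Nat.card_congr <| Equiv.subtypeEquivRight fun w =>
    and_congr_right fun hw => image_sSet_eq_iff hs hst hΦ hf hw

end CoreCounting

/-- The sum over all `(s,t)`-cores of the reciprocals of the orders of their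
stabilisers under the level `t` action of `W̃_s` equals `t^(s-1)/s!`. -/
theorem denom_sum (s t : ℕ) (hs : 2 ≤ s) (ht : 0 < t) (hst : Nat.Coprime s t)
    (Φ : Equiv.Perm ℤ → Equiv.Perm ℤ) (hΦ : IsLevelTAction s t hs Φ) :
    (∑ᶠ p ∈ {p : Partn | IsCore s p ∧ IsCore t p},
        (1 : ℚ) / (Nat.card {w : Equiv.Perm ℤ //
          w ∈ AffSymSet s ∧ ⇑(Φ w) '' sSet s p = sSet s p})) =
      (t : ℚ) ^ (s - 1) / (Nat.factorial s) := by
  have : NeZero s := ⟨by omega⟩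
  have : NeZero t := ⟨ht.ne'⟩
  have : Finite (Equiv.Perm (ZMod s))ᵈᵐᵃ := .of_equiv _ DomMulAct.mk
  choose f hf using fun p : {p // IsCore s p ∧ IsCore t p} => p.2.1.exists_encodes t (lc s t)
  let g (p : {p // IsCore s p ∧ IsCore t p}) : zeroSumMaps (ZMod s) (ZMod t) :=
    ⟨profileMod s t (f p), ((hf p).isProfile hst).sum_profileMod⟩
  have hcard : Nat.card (Equiv.Perm (ZMod s))ᵈᵐᵃ = s.factorial := by
    rw [← Nat.card_congr DomMulAct.mk, Nat.card_perm, Nat.card_zmod]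
  calc _ = ∑ᶠ p : {p // IsCore s p ∧ IsCore t p}, (1 : ℚ) /
        Nat.card (MulAction.stabilizer (Equiv.Perm (ZMod s))ᵈᵐᵃ (g p)) := by
        rw [← finsum_set_coe_eq_finsum_mem]
        exact finsum_congr fun p => by
          rw [card_stabilizer_zeroSumMaps, ← card_stabilizer_core hs hst hΦ (hf p)]
    _ = Nat.card (zeroSumMaps (ZMod s) (ZMod t)) / Nat.card (Equiv.Perm (ZMod s))ᵈᵐᵃ :=
        finsum_one_div_card_stabilizer (bijective_orbit_profileMod hs hst hf fun _ => rfl)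
    _ = (t : ℚ) ^ (s - 1) / s.factorial := by
        rw [card_zeroSumMaps, hcard, Nat.card_zmod, ZMod.card, Nat.cast_pow]
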